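/- Let F be a finite field, n ≥ 1 an integer, and let s ∈ SL_n(F) be a semisimple element, i.e. the order of s is coprime to the characteristic of F. Then the SL_n(F)-conjugacy class of s is a GL_n(F)-conjugacy class: for every g ∈ GL_n(F) there exists h ∈ SL_n(F) with h s h⁻¹ = g s g⁻¹. -/

import Mathlib

/-!
Replacing `g` by `g * z` with `z` in the centralizer of `s` does not change `g * s * g⁻¹`, so the
claim amounts to surjectivity of the determinant on the centralizer of `s` in `GL_n(F)`.

Since `s` has order `m` prime to the characteristic, it is killed by the squarefree polynomial
`X ^ m - 1`, and `F ^ n` is a semisimple `F[X]`-module with `X` acting as `s`. Hence it splits off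
a simple submodule `S`, which is isomorphic to a finite extension field `K = F[X] / I` of `F`.
The multiplications by elements of `K` on `S`, extended by the identity on a complement,
commute with `s`, and their determinants are the norms from `K` to `F`. The norm of an extension
of finite fields is surjective.
-/

/-- On a simple module `S ≃ R ⧸ I` the determinants of endomorphisms include all norms from the
field `R ⧸ I`, hence every scalar. -/
lemma exists_det_eq_of_isSimpleModule {F R S : Type*} [Field F] [Finite F] [CommRing R]
    [Algebra F R] [AddCommGroup S] [Module R S] [Module F S] [IsScalarTower F R S]
    [Module.Finite F S] [IsSimpleModule R S] (c : F) :
    ∃ φ : S →ₗ[R] S, LinearMap.det (φ.restrictScalars F) = c := by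
  obtain ⟨I, hI, ⟨e⟩⟩ := isSimpleModule_iff_quot_maximal.mp (inferInstance : IsSimpleModule R S)
  let _ : Field (R ⧸ I) := Ideal.Quotient.field I
  have : Finite S := Module.finite_of_finite F
  have : Finite (R ⧸ I) := Finite.of_equiv S e.toEquiv
  obtain ⟨u, hu⟩ := FiniteField.norm_surjective F (R ⧸ I) c
  refine ⟨e.symm.toLinearMap ∘ₗ LinearMap.mulLeft R u ∘ₗ e.toLinearMap, ?_⟩
  rw [← hu, Algebra.norm_apply, ← LinearMap.det_conj _ (e.restrictScalars F).symm]
  rfl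

/-- An endomorphism of a simple submodule is extended by the identity on a complement, which leaves
its determinant unchanged. -/
lemma exists_det_eq_of_isSemisimpleModule {F R M : Type*} [Field F] [Finite F] [CommRing R]
    [Algebra F R] [AddCommGroup M] [Module R M] [Module F M] [IsScalarTower F R M]
    [Module.Finite F M] [IsSemisimpleModule R M] [Nontrivial M] (c : F) :
    ∃ φ : M →ₗ[R] M, LinearMap.det (φ.restrictScalars F) = c := by
  obtain ⟨S, hS⟩ := IsSemisimpleModule.exists_simple_submodule R M
  obtain ⟨Q, hQ⟩ := exists_isCompl S
  have : Module.Finite F S := inferInstanceAs (Module.Finite F (S.restrictScalars F))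
  have : Module.Finite F Q := inferInstanceAs (Module.Finite F (Q.restrictScalars F))
  obtain ⟨φ, hφ⟩ := exists_det_eq_of_isSimpleModule (F := F) (R := R) (S := S) c
  let e := Submodule.prodEquivOfIsCompl S Q hQ
  refine ⟨e.toLinearMap ∘ₗ φ.prodMap LinearMap.id ∘ₗ e.symm.toLinearMap, ?_⟩
  have h := LinearMap.det_prodMap (φ.restrictScalars F) (LinearMap.id : Q →ₗ[F] Q)
  rw [hφ, LinearMap.det_id, mul_one] at h
  rw [← h, ← LinearMap.det_conj _ (e.restrictScalars F)]
  rfl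

/-- The determinant is surjective on the centralizer of a semisimple endomorphism. -/
lemma exists_commute_det_eq {F V : Type*} [Field F] [Finite F] [AddCommGroup V] [Module F V]
    [Module.Finite F V] [Nontrivial V] {f : Module.End F V} (hf : f.IsSemisimple) (c : F) :
    ∃ z : Module.End F V, Commute z f ∧ LinearMap.det z = c := by
  have : IsSemisimpleModule (Polynomial F) (Module.AEval' f) := hf
  let o := Module.AEval'.of f
  have : Nontrivial (Module.AEval' f) := o.symm.toEquiv.nontrivial
  have : Module.Finite F (Module.AEval' f) := Module.Finite.equiv o
  obtain ⟨φ, hφ⟩ := exists_det_eq_of_isSemisimpleModule (R := Polynomial F)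
    (M := Module.AEval' f) c
  refine ⟨o.symm.toLinearMap ∘ₗ φ.restrictScalars F ∘ₗ o.toLinearMap, ?_, ?_⟩
  · ext v
    have h := φ.map_smul Polynomial.X (o v)
    rw [Module.AEval'.X_smul_of] at h
    obtain ⟨w, hw⟩ := o.surjective (φ (o v))
    rw [← hw, Module.AEval'.X_smul_of] at h
    simp only [Module.End.mul_apply, LinearMap.comp_apply, LinearEquiv.coe_coe,
      LinearMap.coe_restrictScalars]
    rw [← hw, o.symm_apply_apply]
    exact (congrArg o.symm h).trans (o.symm_apply_apply _)
  · rw [← hφ]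
    exact LinearMap.det_conj _ o.symm

/-- Let `F` be a finite field and `s ∈ SL_n(F)` semisimple (its order is coprime
to the characteristic of `F`). Then the `SL_n(F)`-conjugacy class of `s` is a
`GL_n(F)`-conjugacy class: for every `g ∈ GL_n(F)` there is `h ∈ SL_n(F)` with
`h s h⁻¹ = g s g⁻¹`. -/
theorem conjClass_SL_eq_conjClass_GL_of_semisimple
    (F : Type*) [Field F] [Fintype F] (n : ℕ) (hn : 1 ≤ n)
    (s : GL (Fin n) F) (hsdet : Matrix.GeneralLinearGroup.det s = 1)
    (hs : Nat.Coprime (orderOf s) (ringChar F)) :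
    ∀ g : GL (Fin n) F, ∃ h : GL (Fin n) F,
      Matrix.GeneralLinearGroup.det h = 1 ∧ h * s * h⁻¹ = g * s * g⁻¹ := by
  intro g
  have : Nonempty (Fin n) := ⟨⟨0, hn⟩⟩
  have hm : ((orderOf s : ℕ) : F) ≠ 0 := by
    intro h0
    have hd := (ringChar.spec F _).mp h0
    exact CharP.ringChar_ne_one (R := F) (Nat.eq_one_of_dvd_coprimes hs hd dvd_rfl)
  have hsemi : Module.End.IsSemisimple (Matrix.toLinAlgEquiv' (s : Matrix (Fin n) (Fin n) F)) := by
    refine Module.End.isSemisimple_of_squarefree_aeval_eq_zero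
      (p := Polynomial.X ^ orderOf s - 1)
      (Polynomial.X_pow_sub_one_separable_iff.mpr hm).squarefree ?_
    have h1 : (s : Matrix (Fin n) (Fin n) F) ^ orderOf s = 1 := by
      rw [← Units.val_pow_eq_pow_val, pow_orderOf_eq_one, Units.val_one]
    simp only [map_sub, map_pow, Polynomial.aeval_X, map_one]
    rw [← map_pow, h1, map_one, sub_self]
  obtain ⟨z, hz, hdet⟩ := exists_commute_det_eq hsemi
    (((Matrix.GeneralLinearGroup.det g)⁻¹ : Fˣ) : F)
  let Z := LinearMap.toMatrixAlgEquiv' z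
  have hZdet : Z.det = (((Matrix.GeneralLinearGroup.det g)⁻¹ : Fˣ) : F) := by
    rw [← hdet]
    exact LinearMap.det_toMatrix' z
  let Zu : GL (Fin n) F := Matrix.GeneralLinearGroup.mkOfDetNeZero Z (by
    rw [hZdet]; exact Units.ne_zero _)
  have hcomm : Zu * s = s * Zu := by
    refine Units.ext ?_
    have h := congrArg LinearMap.toMatrixAlgEquiv' hz.eq
    rw [map_mul, map_mul, LinearMap.toMatrixAlgEquiv'_toLinAlgEquiv'] at h
    exact h
  have hd : Matrix.GeneralLinearGroup.det Zu = (Matrix.GeneralLinearGroup.det g)⁻¹ :=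
    Units.ext hZdet
  refine ⟨g * Zu, by rw [map_mul, hd, mul_inv_cancel], ?_⟩
  rw [mul_assoc g, hcomm]
  group
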